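/- arXiv:1403.0057 — 2 statements merged into one kernel-verified Lean document; each statement's English description precedes it below -/
import Mathlib

section
/- Fix a live-edge set L on a finite vertex type V. The reachable-set size is submodular in the seed set: for all S ⊆ T ⊆ V and every v ∈ V, |R(S ∪ {v}, L)| − |R(S, L)| ≥ |R(T ∪ {v}, L)| − |R(T, L)|. -/
open scoped Classical

/-- Weight of a live-edge set `L` under influence probability function `p`:
the product over all ordered pairs `(u,v)` with `u ≠ v` of `p u v` if the
edge is live and `1 - p u v` otherwise. -/
noncomputable def edgeWeight {V : Type*} [Fintype V] [DecidableEq V]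
    (p : V → V → ℝ) (L : Finset (V × V)) : ℝ :=
  ∏ e ∈ (Finset.univ : Finset V).offDiag, (if e ∈ L then p e.1 e.2 else 1 - p e.1 e.2)

/-- The set of vertices reachable from some vertex of `S` via edges of the
live-edge set `L` (reflexive–transitive closure). -/
noncomputable def reachSet {V : Type*} [Fintype V] [DecidableEq V]
    (S : Finset V) (L : Finset (V × V)) : Finset V :=
  Finset.univ.filter (fun x => ∃ s ∈ S, Relation.ReflTransGen (fun a b => (a, b) ∈ L) s x)

/-- Influence spread `σ(S, p)`: the sum over all live-edge sets `L`
(subsets of the off-diagonal pairs) of `w(p,L) * |R(S,L)|`. -/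
noncomputable def infSpread {V : Type*} [Fintype V] [DecidableEq V]
    (S : Finset V) (p : V → V → ℝ) : ℝ :=
  ∑ L ∈ ((Finset.univ : Finset V).offDiag).powerset, edgeWeight p L * (reachSet S L).card

/-- Marginal influence `MI(v | S, p) = σ(S ∪ {v}, p) − σ(S, p)`. -/
noncomputable def marginInf {V : Type*} [Fintype V] [DecidableEq V]
    (v : V) (S : Finset V) (p : V → V → ℝ) : ℝ :=
  infSpread (insert v S) p - infSpread S p

section ReachSet

variable {V : Type*} [Fintype V] [DecidableEq V] {S T : Finset V}

theorem mem_reachSet {L : Finset (V × V)} {x : V} :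
    x ∈ reachSet S L ↔ ∃ s ∈ S, Relation.ReflTransGen (fun a b => (a, b) ∈ L) s x := by
  rw [reachSet, Finset.mem_filter_univ]

theorem reachSet_union (S T : Finset V) (L : Finset (V × V)) :
    reachSet (S ∪ T) L = reachSet S L ∪ reachSet T L := by
  ext x
  simp only [mem_reachSet, Finset.mem_union, or_and_right, exists_or]

theorem reachSet_mono (hST : S ⊆ T) (L : Finset (V × V)) : reachSet S L ⊆ reachSet T L := by
  rw [← Finset.union_eq_right, ← reachSet_union, Finset.union_eq_right.mpr hST]

theorem card_reachSet_union_sub_card_reachSet (U S : Finset V) (L : Finset (V × V)) :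
    ((reachSet (U ∪ S) L).card : ℝ) - ((reachSet S L).card : ℝ) =
      ((reachSet U L \ reachSet S L).card : ℝ) := by
  rw [reachSet_union, ← Finset.card_sdiff_add_card, Nat.cast_add, add_sub_cancel_right]

theorem reachSet_card_submodular_general (L : Finset (V × V)) (hST : S ⊆ T) (U : Finset V) :
    ((reachSet (U ∪ T) L).card : ℝ) - ((reachSet T L).card : ℝ) ≤
      ((reachSet (U ∪ S) L).card : ℝ) - ((reachSet S L).card : ℝ) := by
  rw [card_reachSet_union_sub_card_reachSet, card_reachSet_union_sub_card_reachSet]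
  have newly_reached_subset : reachSet U L \ reachSet T L ⊆ reachSet U L \ reachSet S L :=
    Finset.sdiff_subset_sdiff subset_rfl (reachSet_mono hST L)
  exact_mod_cast Finset.card_le_card newly_reached_subset

end ReachSet

/-- For a fixed live-edge set, the reachable-set size is submodular in the seed set. -/
theorem reachSet_card_submodular {V : Type*} [Fintype V] [DecidableEq V]
    (L : Finset (V × V)) (hL : ∀ e ∈ L, e.1 ≠ e.2) :
    ∀ S T : Finset V, S ⊆ T → ∀ v : V,
      ((reachSet (insert v T) L).card : ℝ) - ((reachSet T L).card : ℝ) ≤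
        ((reachSet (insert v S) L).card : ℝ) - ((reachSet S L).card : ℝ) := by
  intro S T hST v
  simpa only [Finset.insert_eq] using reachSet_card_submodular_general L hST {v}
end

section
/- Let V_1, …, V_d be pairwise disjoint sets covering V and let p_1, …, p_d be fully separable topic influence probability functions with respect to this partition. Let λ_1, …, λ_d ∈ [0,1] with Σ_j λ_j = 1, let D⁺ = {i : λ_i > 0}, and let p = Σ_{j=1}^{d} λ_j p_j (pointwise). Then the influence spread is 1-sub-additive: for every S ⊆ V, σ(S, p) ≤ Σ_{i ∈ D⁺} σ(S, λ_i p_i). -/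
open scoped Classical

/-!
Every edge of positive probability lies inside a single part, so almost surely the set reached from
`S` is the union over the parts `V_i` of the sets reached along live edges inside `V_i`, and its
size is at most the sum of theirs. Since edges are live independently, forgetting the live edges
outside `V_i` has the same effect as setting their probabilities to zero, and this turns `p` into
the contribution of topic `i`.
-/

section RandomSubset

variable {α R : Type*} [DecidableEq α] [CommRing R]

theorem sum_powerset_insert_prod_ite_mul {a : α} {D : Finset α} (ha : a ∉ D) (p : α → R)
    (f : Finset α → R) :
    ∑ L ∈ (insert a D).powerset, (∏ e ∈ insert a D, if e ∈ L then p e else 1 - p e) * f L =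
      ∑ L ∈ D.powerset, (∏ e ∈ D, if e ∈ L then p e else 1 - p e) *
        ((1 - p a) * f L + p a * f (insert a L)) := by
  rw [Finset.sum_powerset_insert ha, ← Finset.sum_add_distrib]
  refine Finset.sum_congr rfl fun L hL ↦ ?_
  have haL : a ∉ L := fun h ↦ ha (Finset.mem_powerset.1 hL h)
  have hprod : (∏ e ∈ D, if e ∈ insert a L then p e else 1 - p e) =
      ∏ e ∈ D, if e ∈ L then p e else 1 - p e :=
    Finset.prod_congr rfl fun e he ↦ by
      simp only [Finset.mem_insert, ne_of_mem_of_not_mem he ha, false_or]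
  rw [Finset.prod_insert ha, Finset.prod_insert ha, hprod, if_neg haL,
    if_pos (Finset.mem_insert_self a L)]
  ring

theorem sum_powerset_prod_ite_mul_inter (D E : Finset α) (p : α → R) (f : Finset α → R) :
    ∑ L ∈ D.powerset, (∏ e ∈ D, if e ∈ L then p e else 1 - p e) * f (L ∩ E) =
      ∑ L ∈ D.powerset,
        (∏ e ∈ D, if e ∈ L then if e ∈ E then p e else 0
          else 1 - if e ∈ E then p e else 0) * f L := by
  induction D using Finset.induction_on generalizing f with
  | empty => simp
  | insert a D ha ih =>
    rw [sum_powerset_insert_prod_ite_mul ha p fun L ↦ f (L ∩ E),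
      sum_powerset_insert_prod_ite_mul ha (fun e ↦ if e ∈ E then p e else 0), ← ih]
    refine Finset.sum_congr rfl fun L _ ↦ congrArg _ ?_
    by_cases haE : a ∈ E
    · rw [if_pos haE, Finset.insert_inter_of_mem haE]
    · rw [if_neg haE, Finset.insert_inter_of_notMem haE]
      ring

end RandomSubset

section Reach

variable {V : Type*} [Fintype V] [DecidableEq V] {S T : Finset V} {L : Finset (V × V)}

theorem subset_reachSet : S ⊆ reachSet S L := fun s hs ↦
  Finset.mem_filter.2 ⟨Finset.mem_univ s, s, hs, .refl⟩

theorem mem_reachSet_of_edge {u v : V} (hu : u ∈ reachSet S L) (huv : (u, v) ∈ L) :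
    v ∈ reachSet S L := by
  obtain ⟨-, s, hs, hsu⟩ := Finset.mem_filter.1 hu
  exact Finset.mem_filter.2 ⟨Finset.mem_univ v, s, hs, hsu.tail huv⟩

theorem reachSet_subset (hS : S ⊆ T) (hT : ∀ u v, (u, v) ∈ L → u ∈ T → v ∈ T) :
    reachSet S L ⊆ T := by
  intro x hx
  obtain ⟨-, s, hs, hsx⟩ := Finset.mem_filter.1 hx
  clear hx
  induction hsx with
  | refl => exact hS hs
  | tail _ huv ih => exact hT _ _ huv ih

theorem reachSet_subset_union (hT : ∀ u v, (u, v) ∈ L → v ∈ T) : reachSet S L ⊆ S ∪ T :=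
  reachSet_subset Finset.subset_union_left fun u v huv _ ↦ Finset.mem_union_right S (hT u v huv)

theorem reachSet_subset_biUnion {ι : Type*} {I : Finset ι} {parts : ι → Finset V}
    (hI : I.Nonempty) (hdisj : (I : Set ι).PairwiseDisjoint parts)
    (hL : ∀ e ∈ L, ∃ i ∈ I, e ∈ parts i ×ˢ parts i) :
    reachSet S L ⊆ I.biUnion fun i ↦ reachSet S (L ∩ parts i ×ˢ parts i) := by
  refine reachSet_subset ?_ fun u v huv hu ↦ ?_
  · obtain ⟨i, hi⟩ := hI
    exact subset_reachSet.trans (Finset.subset_biUnion_of_mem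
      (fun i ↦ reachSet S (L ∩ parts i ×ˢ parts i)) hi)
  · obtain ⟨i, hi, huv_part⟩ := hL _ huv
    obtain ⟨j, hj, hu_reach_j⟩ := Finset.mem_biUnion.1 hu
    -- A vertex outside `S` is reached inside its own part only, so a live path changes parts
    -- only at a vertex of `S`, where it can be restarted.
    have hu_reach_i : u ∈ reachSet S (L ∩ parts i ×ˢ parts i) := by
      have hu_union : u ∈ S ∪ parts j := reachSet_subset_union
        (fun _ _ h ↦ (Finset.mem_product.1 (Finset.mem_inter.1 h).2).2) hu_reach_j
      rcases Finset.mem_union.1 hu_union with huS | huj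
      · exact subset_reachSet huS
      · obtain rfl : j = i := hdisj.elim_finset hj hi u huj (Finset.mem_product.1 huv_part).1
        exact hu_reach_j
    exact Finset.mem_biUnion.2
      ⟨i, hi, mem_reachSet_of_edge hu_reach_i (Finset.mem_inter.2 ⟨huv, huv_part⟩)⟩

end Reach

section Separable

variable {V ι : Type*} {I : Finset ι} {parts : ι → Finset V} {q : ι → V → V → ℝ}

theorem sum_eq_of_mem_part (hdisj : (I : Set ι).PairwiseDisjoint parts)
    (hsep : ∀ i ∈ I, ∀ u v, q i u v ≠ 0 → u ∈ parts i ∧ v ∈ parts i) {i : ι} (hi : i ∈ I)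
    {u : V} (hu : u ∈ parts i) (v : V) : ∑ j ∈ I, q j u v = q i u v := by
  refine Finset.sum_eq_single_of_mem i hi fun j hj hji ↦ ?_
  by_contra hq
  exact hji (hdisj.elim_finset hj hi u (hsep j hj u v hq).1 hu)

/-- The influence probability function that agrees with `p` on the ordered pairs in `E` and
vanishes elsewhere. It describes the network in which only the edges in `E` are kept. -/
noncomputable def restrictEdges [DecidableEq V] (p : V → V → ℝ) (E : Finset (V × V)) :
    V → V → ℝ :=
  fun u v ↦ if (u, v) ∈ E then p u v else 0

theorem restrictEdges_sum [DecidableEq V] (hdisj : (I : Set ι).PairwiseDisjoint parts)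
    (hsep : ∀ i ∈ I, ∀ u v, q i u v ≠ 0 → u ∈ parts i ∧ v ∈ parts i) {i : ι} (hi : i ∈ I) :
    restrictEdges (fun u v ↦ ∑ j ∈ I, q j u v) (parts i ×ˢ parts i) = q i := by
  funext u v
  unfold restrictEdges
  split_ifs with huv
  · exact sum_eq_of_mem_part hdisj hsep hi (Finset.mem_product.1 huv).1 v
  · by_contra hq
    exact huv (Finset.mem_product.2 (hsep i hi u v (Ne.symm hq)))

end Separable

section Spread

variable {V : Type*} [Fintype V] [DecidableEq V] {p : V → V → ℝ}

theorem edgeWeight_nonneg (hp : ∀ u v, 0 ≤ p u v ∧ p u v ≤ 1) (L : Finset (V × V)) :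
    0 ≤ edgeWeight p L := by
  refine Finset.prod_nonneg fun e _ ↦ ?_
  split_ifs
  · exact (hp e.1 e.2).1
  · exact sub_nonneg.2 (hp e.1 e.2).2

theorem ne_zero_of_edgeWeight_ne_zero {L : Finset (V × V)} {e : V × V}
    (hL : L ⊆ Finset.univ.offDiag) (hw : edgeWeight p L ≠ 0) (he : e ∈ L) : p e.1 e.2 ≠ 0 := by
  simpa only [if_pos he] using Finset.prod_ne_zero_iff.1 hw e (hL he)

theorem infSpread_restrictEdges (S : Finset V) (p : V → V → ℝ) (E : Finset (V × V)) :
    infSpread S (restrictEdges p E) =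
      ∑ L ∈ (Finset.univ : Finset V).offDiag.powerset,
        edgeWeight p L * (reachSet S (L ∩ E)).card :=
  (sum_powerset_prod_ite_mul_inter _ E (fun e ↦ p e.1 e.2)
    fun L ↦ ((reachSet S L).card : ℝ)).symm

theorem infSpread_le_sum_restrictEdges {ι : Type*} {I : Finset ι} {parts : ι → Finset V}
    (hI : I.Nonempty) (hdisj : (I : Set ι).PairwiseDisjoint parts)
    (hp : ∀ u v, 0 ≤ p u v ∧ p u v ≤ 1)
    (hsep : ∀ u v, p u v ≠ 0 → ∃ i ∈ I, u ∈ parts i ∧ v ∈ parts i) (S : Finset V) :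
    infSpread S p ≤ ∑ i ∈ I, infSpread S (restrictEdges p (parts i ×ˢ parts i)) := by
  simp_rw [infSpread_restrictEdges]
  rw [Finset.sum_comm]
  refine Finset.sum_le_sum fun L hL ↦ ?_
  rw [← Finset.mul_sum]
  by_cases hw : edgeWeight p L = 0
  · simp [hw]
  have hedge : ∀ e ∈ L, ∃ i ∈ I, e ∈ parts i ×ˢ parts i := fun e he ↦ by
    simpa only [Finset.mem_product] using
      hsep _ _ (ne_zero_of_edgeWeight_ne_zero (Finset.mem_powerset.1 hL) hw he)
  have hcard : (reachSet S L).card ≤ ∑ i ∈ I, (reachSet S (L ∩ parts i ×ˢ parts i)).card :=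
    (Finset.card_le_card (reachSet_subset_biUnion hI hdisj hedge)).trans Finset.card_biUnion_le
  exact mul_le_mul_of_nonneg_left (mod_cast hcard) (edgeWeight_nonneg hp L)

end Spread

theorem infSpread_one_subadditive_general {V ι : Type*} [Fintype V] [DecidableEq V]
    {I : Finset ι} {parts : ι → Finset V} {p : V → V → ℝ} {q : ι → V → V → ℝ}
    (hI : I.Nonempty) (hdisj : (I : Set ι).PairwiseDisjoint parts)
    (hq : ∀ i ∈ I, ∀ u v, 0 ≤ q i u v ∧ q i u v ≤ 1)
    (hsep : ∀ i ∈ I, ∀ u v, q i u v ≠ 0 → u ∈ parts i ∧ v ∈ parts i)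
    (hp : ∀ u v, p u v = ∑ i ∈ I, q i u v) (S : Finset V) :
    infSpread S p ≤ ∑ i ∈ I, infSpread S (q i) := by
  obtain rfl : p = fun u v ↦ ∑ i ∈ I, q i u v := funext₂ hp
  have hsupp : ∀ u v, ∑ i ∈ I, q i u v ≠ 0 → ∃ i ∈ I, u ∈ parts i ∧ v ∈ parts i := by
    intro u v huv
    obtain ⟨i, hi, hqi⟩ := Finset.exists_ne_zero_of_sum_ne_zero huv
    exact ⟨i, hi, hsep i hi u v hqi⟩
  have hbound : ∀ u v, 0 ≤ ∑ i ∈ I, q i u v ∧ ∑ i ∈ I, q i u v ≤ 1 := by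
    intro u v
    by_cases huv : ∑ i ∈ I, q i u v = 0
    · simp [huv]
    · obtain ⟨i, hi, hu, -⟩ := hsupp u v huv
      rw [sum_eq_of_mem_part hdisj hsep hi hu]
      exact hq i hi u v
  calc infSpread S (fun u v ↦ ∑ i ∈ I, q i u v)
      ≤ ∑ i ∈ I, infSpread S
          (restrictEdges (fun u v ↦ ∑ j ∈ I, q j u v) (parts i ×ˢ parts i)) :=
        infSpread_le_sum_restrictEdges hI hdisj hbound hsupp S
    _ = ∑ i ∈ I, infSpread S (q i) :=
        Finset.sum_congr rfl fun i hi ↦ by rw [restrictEdges_sum hdisj hsep hi]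

/-- In a fully separable network, the influence spread is 1-sub-additive in the
topic mixture. -/
theorem infSpread_one_subadditive {V : Type*} [Fintype V] [DecidableEq V] {d : ℕ}
    (parts : Fin d → Finset V)
    (hdisj : ∀ i j, i ≠ j → Disjoint (parts i) (parts j))
    (hcover : ∀ x : V, ∃ i, x ∈ parts i)
    (pt : Fin d → V → V → ℝ)
    (hpt1 : ∀ i u v, 0 ≤ pt i u v ∧ pt i u v ≤ 1) (hpt2 : ∀ i v, pt i v v = 0)
    (hsep : ∀ i u v, pt i u v ≠ 0 → u ∈ parts i ∧ v ∈ parts i)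
    (lam : Fin d → ℝ) (hlam : ∀ i, 0 ≤ lam i ∧ lam i ≤ 1) (hsum : ∑ i, lam i = 1)
    (p : V → V → ℝ) (hpdef : ∀ u w, p u w = ∑ j, lam j * pt j u w) :
    ∀ S : Finset V,
      infSpread S p ≤
        ∑ i ∈ Finset.univ.filter (fun i => 0 < lam i),
          infSpread S (fun u w => lam i * pt i u w) := by
  have hpos : ∃ i ∈ Finset.univ, 0 < lam i :=
    (Finset.sum_pos_iff_of_nonneg fun i _ ↦ (hlam i).1).1 (hsum ▸ one_pos)
  have hp : ∀ u w, p u w = ∑ i with 0 < lam i, lam i * pt i u w := fun u w ↦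
    (hpdef u w).trans (Finset.sum_filter_of_ne fun i _ hi ↦
      (hlam i).1.lt_of_ne' (left_ne_zero_of_mul hi)).symm
  exact infSpread_one_subadditive_general (Finset.filter_nonempty_iff.2 hpos)
    (fun i _ j _ ↦ hdisj i j)
    (fun i _ u w ↦ ⟨mul_nonneg (hlam i).1 (hpt1 i u w).1,
      mul_le_one₀ (hlam i).2 (hpt1 i u w).1 (hpt1 i u w).2⟩)
    (fun i _ u w h ↦ hsep i u w (right_ne_zero_of_mul h)) hp
end
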